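/- Let Γ and Γ' be finite connected loopless multigraphs, each with at least one edge, let w be a weight on Γ, and let φ : Γ → Γ' be a w-harmonic morphism. Fix an orientation of every edge of Γ' (a choice of head and tail among its two endpoints), and give each edge e of Γ the induced orientation: the head of e is the endpoint of e mapping to the head of φ(e). Let ∂ : ℤ^{E(Γ)} → ℤ^{V(Γ)} and ∂' : ℤ^{E(Γ')} → ℤ^{V(Γ')} be the boundary maps sending an oriented edge to (its head) − (its tail). Define the ℤ-linear maps σ : ℤ^{E(Γ')} → ℤ^{E(Γ)} by σ(e') = Σ_{e ∈ φ^{-1}(e')} w(e)·e and σ_0 : ℤ^{V(Γ')} → ℤ^{V(Γ)} by σ_0(v') = Σ_{v ∈ φ^{-1}(v')} m_φ(v)·v. Then σ is injective and ∂ ∘ σ = σ_0 ∘ ∂'; in particular σ maps ker ∂' injectively into ker ∂. -/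

import Mathlib

open Finset

/-- A finite loopless connected multigraph: vertices `V`, edges `E`, each edge incident
to an unordered pair of distinct vertices. -/
structure Multigraph (V E : Type) [Fintype V] [Fintype E] where
  inc : E → Sym2 V
  loopless : ∀ e, ¬ (inc e).IsDiag
  connected : (SimpleGraph.fromRel fun u v => ∃ e, inc e = s(u, v)).Connected

variable {V E V' E' : Type} [Fintype V] [Fintype E] [Fintype V'] [Fintype E']
  [DecidableEq V] [DecidableEq E] [DecidableEq V'] [DecidableEq E']

/-- The degree of a vertex: the number of edges incident to it. -/
def Multigraph.deg (G : Multigraph V E) (v : V) : ℤ :=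
  ((univ.filter fun e => v ∈ G.inc e).card : ℤ)

/-- The first Betti number `#E - #V + 1` of a connected graph. -/
def Multigraph.b1 (G : Multigraph V E) : ℤ :=
  (Fintype.card E : ℤ) - (Fintype.card V : ℤ) + 1

/-- The canonical divisor `K_Γ(v) = deg v - 2`. -/
def Multigraph.K (G : Multigraph V E) : V → ℤ := fun v => G.deg v - 2

/-- A morphism of multigraphs: maps on vertices and edges compatible with incidence. -/
structure GraphHom (G : Multigraph V E) (G' : Multigraph V' E') where
  vmap : V → V'
  emap : E → E'
  compat : ∀ e : E, Sym2.map vmap (G.inc e) = G'.inc (emap e)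

/-- `localDeg G G' φ w v e'` is `Σ_{e incident to v, φ(e) = e'} w(e)`. -/
def localDeg (G : Multigraph V E) (G' : Multigraph V' E') (φ : GraphHom G G')
    (w : E → ℤ) (v : V) (e' : E') : ℤ :=
  ∑ e ∈ univ.filter (fun e => v ∈ G.inc e ∧ φ.emap e = e'), w e

/-!
Commutation with the boundary is checked separately on heads and on tails. Because `Γ'` has no
loops, the edges at `v` lying over an edge `e'` with head `φ(v)` are exactly those with head `v`,
so harmonicity says that their weights add up to `m_φ(v)`.

For injectivity it suffices that `φ` is surjective on edges. If `v` lies on some edge, then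
`m_φ(v) > 0`, so every edge of `Γ'` at `φ(v)` lifts to an edge at `v`; connectedness of `Γ'`
propagates this from one edge of `Γ` to all edges of `Γ'`.
-/

section FiberSum

variable {X Y X' Y' A : Type*} [AddCommGroup A]

/-- The linear map `y ↦ Σ_{x ∈ f⁻¹(y)} c(x)·x`, written in coordinates and with coefficients in `A`.
Both `σ` and `σ₀` are of this form. -/
def weightedPullback (c : X → ℤ) (f : X → Y) : (Y → A) →ₗ[ℤ] (X → A) where
  toFun a x := c x • a (f x)
  map_add' _ _ := funext fun _ => smul_add _ _ _
  map_smul' n a := funext fun x => smul_comm (c x) n (a (f x))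

/-- The linear extension of `f : X → Y` to free abelian groups, written in coordinates and with
coefficients in `A`: the coefficient at `y` is the sum over the fiber of `y`. -/
def fiberSum [Fintype X] [DecidableEq Y] (f : X → Y) : (X → A) →ₗ[ℤ] (Y → A) where
  toFun a y := ∑ x with f x = y, a x
  map_add' _ _ := funext fun _ => sum_add_distrib
  map_smul' n a := funext fun _ => (smul_sum (r := n) (f := a)).symm

theorem weightedPullback_injective [IsAddTorsionFree A] {c : X → ℤ} {f : X → Y}
    (hc : ∀ x, c x ≠ 0) (hf : f.Surjective) :
    Function.Injective (weightedPullback (A := A) c f) := by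
  intro a b hab
  funext y
  obtain ⟨x, rfl⟩ := hf y
  exact zsmul_right_injective (hc x) (congrFun hab x)

theorem fiberSum_comp_weightedPullback [Fintype X] [Fintype X'] [DecidableEq X'] [DecidableEq Y]
    [DecidableEq Y'] {h : X → Y} {h' : X' → Y'} {f : X → X'} {g : Y → Y'} {c : X → ℤ} {m : Y → ℤ}
    (hcomm : ∀ x, g (h x) = h' (f x))
    (hm : ∀ y x', h' x' = g y → ∑ x with h x = y ∧ f x = x', c x = m y) :
    fiberSum h ∘ₗ weightedPullback (A := A) c f = weightedPullback m g ∘ₗ fiberSum h' := by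
  refine LinearMap.ext fun a => funext fun y => ?_
  have maps_fiber : ∀ x ∈ ({x | h x = y} : Finset X), f x ∈ ({x' | h' x' = g y} : Finset X') := by
    simp only [mem_filter_univ]
    rintro x rfl
    exact (hcomm x).symm
  calc ∑ x with h x = y, c x • a (f x)
      = ∑ x' with h' x' = g y, ∑ x with h x = y ∧ f x = x', c x • a (f x) := by
        simp only [← sum_fiberwise_of_maps_to maps_fiber, filter_filter]
    _ = ∑ x' with h' x' = g y, (∑ x with h x = y ∧ f x = x', c x) • a x' := by
        refine sum_congr rfl fun x' _ => ?_
        rw [sum_smul]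
        exact sum_congr rfl fun x hx => by rw [((mem_filter_univ x).1 hx).2]
    _ = ∑ x' with h' x' = g y, m y • a x' :=
        sum_congr rfl fun x' hx' => by rw [hm y x' ((mem_filter_univ x').1 hx')]
    _ = m y • ∑ x' with h' x' = g y, a x' := smul_sum.symm

end FiberSum

namespace Multigraph

/-- A choice of head and tail among the two endpoints of every edge. -/
structure Orientation (G : Multigraph V E) where
  head : E → V
  tail : E → V
  inc_eq : ∀ e, G.inc e = s(head e, tail e)

namespace Orientation

variable {G : Multigraph V E} {A : Type*} [AddCommGroup A]

/-- The opposite orientation; it reduces statements about tails to statements about heads. -/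
def reverse (o : G.Orientation) : G.Orientation where
  head := o.tail
  tail := o.head
  inc_eq e := (o.inc_eq e).trans Sym2.eq_swap

/-- The boundary map `∂` from edge chains to vertex chains with coefficients in `A`, sending an
edge to its head minus its tail. -/
def boundary (o : G.Orientation) : (E → A) →ₗ[ℤ] (V → A) :=
  fiberSum o.head - fiberSum o.tail

omit [DecidableEq V] [DecidableEq E] in
theorem head_ne_tail (o : G.Orientation) (e : E) : o.head e ≠ o.tail e := by
  intro head_eq_tail
  exact G.loopless e (o.inc_eq e ▸ Sym2.mk_isDiag_iff.2 head_eq_tail)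

end Orientation

omit [DecidableEq V] [DecidableEq E] in
theorem connected_induction (G : Multigraph V E) {P : V → Prop} {v₀ : V} (base : P v₀)
    (step : ∀ e u v, G.inc e = s(u, v) → P u → P v) (v : V) : P v := by
  have reachable := G.connected.preconnected v₀ v
  rw [SimpleGraph.reachable_iff_reflTransGen] at reachable
  induction reachable with
  | refl => exact base
  | tail _ adj ih =>
    obtain ⟨-, ⟨e, he⟩ | ⟨e, he⟩⟩ := (SimpleGraph.fromRel_adj ..).1 adj
    · exact step e _ _ he ih
    · exact step e _ _ (he.trans Sym2.eq_swap) ih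

end Multigraph

namespace GraphHom

omit [DecidableEq E]

/-- The orientation `o` of the source is the one induced by the orientation `o'` of the target. -/
structure IsOriented {G : Multigraph V E} {G' : Multigraph V' E'} (φ : GraphHom G G')
    (o : G.Orientation) (o' : G'.Orientation) : Prop where
  head : ∀ e, φ.vmap (o.head e) = o'.head (φ.emap e)
  tail : ∀ e, φ.vmap (o.tail e) = o'.tail (φ.emap e)

/-- `φ` is `w`-harmonic with multiplicities `m v = m_φ(v)`. If no edge of the target is incident
to `φ v`, then `m v` is unconstrained. -/
def IsHarmonic {G : Multigraph V E} {G' : Multigraph V' E'} (φ : GraphHom G G') (w : E → ℤ)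
    (m : V → ℤ) : Prop :=
  ∀ v e', φ.vmap v ∈ G'.inc e' → localDeg G G' φ w v e' = m v

variable {G : Multigraph V E} {G' : Multigraph V' E'} {φ : GraphHom G G'} {w : E → ℤ} {m : V → ℤ}
  {o : G.Orientation} {o' : G'.Orientation} {A : Type*} [AddCommGroup A]

omit [DecidableEq V] [DecidableEq V'] [DecidableEq E'] in
theorem IsOriented.reverse (hφ : φ.IsOriented o o') : φ.IsOriented o.reverse o'.reverse where
  head := hφ.tail
  tail := hφ.head

omit [DecidableEq V] [DecidableEq V'] [DecidableEq E'] in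
theorem vmap_mem_inc_emap (φ : GraphHom G G') {v : V} {e : E} (hv : v ∈ G.inc e) :
    φ.vmap v ∈ G'.inc (φ.emap e) :=
  φ.compat e ▸ Sym2.mem_map.2 ⟨v, hv, rfl⟩

omit [DecidableEq V'] in
theorem IsOriented.localDeg_eq_sum_head (hφ : φ.IsOriented o o') (w : E → ℤ) {v : V} {e' : E'}
    (he' : o'.head e' = φ.vmap v) :
    localDeg G G' φ w v e' = ∑ e with o.head e = v ∧ φ.emap e = e', w e := by
  refine sum_congr (filter_congr fun e _ => and_congr_left ?_) fun _ _ => rfl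
  rintro rfl
  have tail_ne : v ≠ o.tail e := by
    rintro rfl
    exact o'.head_ne_tail _ (he'.trans (hφ.tail e))
  rw [o.inc_eq, Sym2.mem_iff, or_iff_left tail_ne, eq_comm]

namespace IsHarmonic

theorem fiberSum_head_comp_weightedPullback (hm : φ.IsHarmonic w m) (hφ : φ.IsOriented o o') :
    fiberSum o.head ∘ₗ weightedPullback (A := A) w φ.emap =
      weightedPullback m φ.vmap ∘ₗ fiberSum o'.head := by
  refine fiberSum_comp_weightedPullback hφ.head fun v e' he' => ?_
  have vmap_mem : φ.vmap v ∈ G'.inc e' := by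
    rw [o'.inc_eq, ← he']
    exact Sym2.mem_mk_left _ _
  rw [← hφ.localDeg_eq_sum_head w he', hm v e' vmap_mem]

theorem boundary_comp_weightedPullback (hm : φ.IsHarmonic w m) (hφ : φ.IsOriented o o') :
    o.boundary ∘ₗ weightedPullback (A := A) w φ.emap =
      weightedPullback m φ.vmap ∘ₗ o'.boundary := by
  have heads := hm.fiberSum_head_comp_weightedPullback (A := A) hφ
  have tails : fiberSum o.tail ∘ₗ weightedPullback (A := A) w φ.emap =
      weightedPullback m φ.vmap ∘ₗ fiberSum o'.tail :=
    hm.fiberSum_head_comp_weightedPullback hφ.reverse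
  simp only [Multigraph.Orientation.boundary, LinearMap.sub_comp, LinearMap.comp_sub, heads, tails]

omit [DecidableEq V'] in
theorem exists_mem_inc_emap_eq (hm : φ.IsHarmonic w m) (hw : ∀ e, 0 < w e) {v : V} {e : E}
    (hv : v ∈ G.inc e) {e' : E'} (he' : φ.vmap v ∈ G'.inc e') :
    ∃ e₁, v ∈ G.inc e₁ ∧ φ.emap e₁ = e' := by
  have localDeg_pos : 0 < localDeg G G' φ w v e' := by
    rw [hm v e' he', ← hm v _ (φ.vmap_mem_inc_emap hv)]
    exact sum_pos (fun e _ => hw e) ⟨e, by simp [hv]⟩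
  obtain ⟨e₁, he₁, -⟩ := exists_ne_zero_of_sum_ne_zero localDeg_pos.ne'
  exact ⟨e₁, (mem_filter_univ e₁).1 he₁⟩

omit [DecidableEq V'] in
theorem exists_mem_inc_vmap_eq [Nonempty E] (hm : φ.IsHarmonic w m) (hw : ∀ e, 0 < w e) (v' : V') :
    ∃ v e, v ∈ G.inc e ∧ φ.vmap v = v' := by
  let e₀ : E := Classical.arbitrary E
  refine G'.connected_induction (P := fun v' => ∃ v e, v ∈ G.inc e ∧ φ.vmap v = v')
    ⟨_, e₀, Sym2.out_fst_mem _, rfl⟩ ?_ v'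
  rintro e' _ v' he' ⟨u, e, hu, rfl⟩
  obtain ⟨e₁, -, rfl⟩ := hm.exists_mem_inc_emap_eq hw hu (he' ▸ Sym2.mem_mk_left _ _)
  have hv' : v' ∈ Sym2.map φ.vmap (G.inc e₁) := by
    rw [φ.compat, he']
    exact Sym2.mem_mk_right _ _
  obtain ⟨v, hv, rfl⟩ := Sym2.mem_map.1 hv'
  exact ⟨v, e₁, hv, rfl⟩

omit [DecidableEq V'] in
theorem emap_surjective [Nonempty E] (hm : φ.IsHarmonic w m) (hw : ∀ e, 0 < w e) :
    φ.emap.Surjective := by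
  intro e'
  obtain ⟨v, e, hv, hv'⟩ := hm.exists_mem_inc_vmap_eq hw (G'.inc e').out.1
  obtain ⟨e₁, -, he₁⟩ := hm.exists_mem_inc_emap_eq hw hv (hv' ▸ Sym2.out_fst_mem _)
  exact ⟨e₁, he₁⟩

end IsHarmonic

end GraphHom

omit [DecidableEq E] in
theorem chain_complex_section_general {A : Type*} [AddCommGroup A] [IsAddTorsionFree A]
    [Nonempty E] {G : Multigraph V E} {G' : Multigraph V' E'} {φ : GraphHom G G'}
    {w : E → ℤ} {m : V → ℤ} {o : G.Orientation} {o' : G'.Orientation}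
    (hw : ∀ e, 0 < w e) (hm : φ.IsHarmonic w m) (hφ : φ.IsOriented o o') :
    Function.Injective (weightedPullback (A := A) w φ.emap) ∧
      o.boundary ∘ₗ weightedPullback (A := A) w φ.emap =
        weightedPullback m φ.vmap ∘ₗ o'.boundary ∧
      (o'.boundary (A := A)).ker ≤ o.boundary.ker.comap (weightedPullback w φ.emap) := by
  have commutes := hm.boundary_comp_weightedPullback (A := A) hφ
  refine ⟨weightedPullback_injective (fun e => (hw e).ne') (hm.emap_surjective hw), commutes, ?_⟩
  rw [← LinearMap.ker_comp, commutes]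
  exact LinearMap.ker_le_ker_comp _ _

/-- Given a `w`-harmonic morphism `φ : Γ → Γ'` (both graphs having at
least one edge), an orientation `(ehead', etail')` of the edges of `Γ'` and the induced
orientation `(ehead, etail)` of the edges of `Γ` (the head of `e` is the endpoint of `e`
mapping to the head of `φ(e)`), the map `σ : ℤ^{E(Γ')} → ℤ^{E(Γ)}`,
`σ(e') = Σ_{e ∈ φ⁻¹(e')} w(e)·e`, is injective and satisfies `∂ ∘ σ = σ₀ ∘ ∂'`, where
`σ₀(v') = Σ_{v ∈ φ⁻¹(v')} m_φ(v)·v` and `∂, ∂'` are the boundary maps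
(oriented edge ↦ head − tail); in particular `σ` maps `ker ∂'` injectively into `ker ∂`. -/
theorem chain_complex_section
    (G : Multigraph V E) (G' : Multigraph V' E') (φ : GraphHom G G')
    (w : E → ℤ) (hw : ∀ e, 0 < w e) (m : V → ℤ)
    (hm : ∀ (v : V) (e' : E'), φ.vmap v ∈ G'.inc e' → localDeg G G' φ w v e' = m v)
    (hE : Nonempty E) (hE' : Nonempty E')
    (ehead' etail' : E' → V') (hor' : ∀ e' : E', G'.inc e' = s(ehead' e', etail' e'))
    (ehead etail : E → V) (hor : ∀ e : E, G.inc e = s(ehead e, etail e))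
    (hhead : ∀ e : E, φ.vmap (ehead e) = ehead' (φ.emap e))
    (htail : ∀ e : E, φ.vmap (etail e) = etail' (φ.emap e)) :
    -- boundary map of Γ : ℤ^{E(Γ)} → ℤ^{V(Γ)}
    let bd : (E → ℤ) → (V → ℤ) := fun x v =>
      (∑ e ∈ univ.filter (fun e => ehead e = v), x e)
        - (∑ e ∈ univ.filter (fun e => etail e = v), x e)
    -- boundary map of Γ' : ℤ^{E(Γ')} → ℤ^{V(Γ')}
    let bd' : (E' → ℤ) → (V' → ℤ) := fun y v' =>
      (∑ e' ∈ univ.filter (fun e' => ehead' e' = v'), y e')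
        - (∑ e' ∈ univ.filter (fun e' => etail' e' = v'), y e')
    -- the section σ : ℤ^{E(Γ')} → ℤ^{E(Γ)}, e' ↦ Σ_{e ∈ φ⁻¹(e')} w(e)·e
    let σ : (E' → ℤ) → (E → ℤ) := fun y e => w e * y (φ.emap e)
    -- σ₀ : ℤ^{V(Γ')} → ℤ^{V(Γ)}, v' ↦ Σ_{v ∈ φ⁻¹(v')} m_φ(v)·v
    let σ₀ : (V' → ℤ) → (V → ℤ) := fun y v => m v * y (φ.vmap v)
    Function.Injective σ ∧ (∀ y : E' → ℤ, bd (σ y) = σ₀ (bd' y)) ∧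
      (∀ y : E' → ℤ, bd' y = 0 → bd (σ y) = 0) := by
  obtain ⟨injective, commutes, ker_le⟩ := chain_complex_section_general (A := ℤ) (φ := φ)
    (o := ⟨ehead, etail, hor⟩) (o' := ⟨ehead', etail', hor'⟩) hw hm ⟨hhead, htail⟩
  exact ⟨injective, LinearMap.congr_fun commutes, fun _ hy => ker_le hy⟩
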